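/- arXiv:1203.1480 — 2 statements merged into one kernel-verified Lean document; each statement's English description precedes it below -/
import Mathlib

section
/- Let σ > 0 and let m = ⌊σ⌋ + 1 be the smallest integer strictly greater than σ. Define Ψ(w,z) = ∫_0^w (d^m/dz^m)[z e^{-z²/(4v)}] v^{-3/2} dv for w ≥ 0 and z > 0, where d^m/dz^m denotes the m-th derivative in z. Then there exists C > 0 such that for every u > 0, (∫_0^∞ t^{2σ} |∫_0^∞ Ψ(u, t+s) s^{m-σ-1} ds|² dt/t)^{1/2} ≤ C. -/
/-!
Write `h(y) = e^{-y²/4}` and `m = ⌊σ⌋ + 1`. Since `z e^{-z²/(4v)} = -2v ∂_z e^{-z²/(4v)}`, the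
integrand defining `Ψ` is `-2 v^{-m/2-1} h^{(m+1)}(z/√v)`. The three-term recurrence
`h^{(m+1)}(y) = -(y/2) h^{(m)}(y) - (m/2) h^{(m-1)}(y)` shows that this is exactly the `v`-derivative
of `-2 v^{-m/2} h^{(m-1)}(z/√v)`, which vanishes as `v → 0+`. Hence
`Ψ(u,z) = -2 u^{-m/2} h^{(m-1)}(z/√u)`, and so `|Ψ(u,z)| ≤ C u^{-m/2} e^{-z/√u}` (`PsiFn_bound`).

With this bound both remaining integrals are dominated by Gamma integrals: the inner one is at most
`C Γ(m-σ) u^{-σ/2} e^{-t/√u}`, and the outer one is at most a constant times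
`u^{-σ} ∫ t^{2σ-1} e^{-2t/√u} dt = 2^{-2σ} Γ(2σ)`, which does not depend on `u`.
-/

open Real MeasureTheory

/-- `m σ = ⌊σ⌋ + 1`, the smallest integer strictly greater than `σ > 0`. -/
noncomputable def mIdx (σ : ℝ) : ℕ := ⌊σ⌋₊ + 1

/-- `Ψ(w,z) = ∫_0^w (d^m/dz^m)[z e^{-z²/(4v)}] v^{-3/2} dv`. -/
noncomputable def PsiFn (σ : ℝ) (w z : ℝ) : ℝ :=
  ∫ v in Set.Ioc (0 : ℝ) w,
    iteratedDeriv (mIdx σ) (fun z : ℝ => z * Real.exp (-(z ^ 2 / (4 * v)))) z *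
      v ^ (-(3 : ℝ) / 2)

/-- The rescaled Hermite polynomials, defined by `(d/dy)^k e^{-y²/4} = P_k(y) e^{-y²/4}`. -/
noncomputable def gaussPoly : ℕ → Polynomial ℝ
  | 0 => 1
  | k + 1 => Polynomial.derivative (gaussPoly k)
      - Polynomial.C (1 / 2 : ℝ) * Polynomial.X * gaussPoly k

/-- The `k`-th derivative of `y ↦ e^{-y²/4}`. -/
noncomputable def gaussDer (k : ℕ) (y : ℝ) : ℝ :=
  (gaussPoly k).eval y * Real.exp (-(y ^ 2 / 4))

lemma derivative_gaussPoly (k : ℕ) : Polynomial.derivative (gaussPoly (k + 1)) =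
    -(Polynomial.C (((k : ℝ) + 1) / 2) * gaussPoly k) := by
  induction k with
  | zero =>
    simp [gaussPoly]
  | succ k ih =>
    have h1 : gaussPoly (k + 1 + 1) = Polynomial.derivative (gaussPoly (k + 1))
      - Polynomial.C (1 / 2 : ℝ) * Polynomial.X * gaussPoly (k + 1) := rfl
    have h2 : gaussPoly (k + 1) = Polynomial.derivative (gaussPoly k)
      - Polynomial.C (1 / 2 : ℝ) * Polynomial.X * gaussPoly k := rfl
    have h3 : Polynomial.derivative (gaussPoly k) = gaussPoly (k + 1)
      + Polynomial.C (1 / 2 : ℝ) * Polynomial.X * gaussPoly k := by rw [h2]; ring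
    rw [h1, ih]
    simp only [Polynomial.derivative_sub, Polynomial.derivative_neg, Polynomial.derivative_mul,
      Polynomial.derivative_C, Polynomial.derivative_X, ih, h3]
    apply Polynomial.funext
    intro x
    simp
    ring

lemma hasDerivAt_gaussDer (k : ℕ) (y : ℝ) : HasDerivAt (gaussDer k) (gaussDer (k + 1) y) y := by
  have h1 := (gaussPoly k).hasDerivAt y
  have h2 : HasDerivAt (fun y : ℝ => Real.exp (-(y ^ 2 / 4)))
      (Real.exp (-(y ^ 2 / 4)) * (-(2 * y / 4))) y := by
    have := (((hasDerivAt_id y).pow 2).div_const 4).neg.exp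
    simpa using this
  have h3 := h1.mul h2
  refine h3.congr_deriv ?_
  simp only [gaussDer, gaussPoly]
  simp
  ring

lemma gaussDer_recurrence (k : ℕ) (y : ℝ) :
    gaussDer (k + 2) y = -(((k : ℝ) + 1) / 2 * gaussDer k y) - y / 2 * gaussDer (k + 1) y := by
  have h1 : gaussPoly (k + 2) = Polynomial.derivative (gaussPoly (k + 1))
      - Polynomial.C (1 / 2 : ℝ) * Polynomial.X * gaussPoly (k + 1) := rfl
  simp only [gaussDer, h1, derivative_gaussPoly]
  simp
  ring

lemma gaussDer_bound (k : ℕ) : ∃ C > 0, ∀ y : ℝ, 0 ≤ y → |gaussDer k y| ≤ C * Real.exp (-y) := by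
  have ht := (gaussPoly k).tendsto_div_exp_atTop
  obtain ⟨C, hC⟩ : ∃ C, ∀ y : ℝ, 0 ≤ y → |(gaussPoly k).eval y / Real.exp y| ≤ C := by
    have h1 : ∀ᶠ y in Filter.atTop, |(gaussPoly k).eval y / Real.exp y| < 1 := by
      have := ht.abs
      rw [abs_zero] at this
      exact this.eventually (gt_mem_nhds one_pos)
    obtain ⟨A, hA⟩ := Filter.eventually_atTop.1 h1
    have hc : Continuous fun y : ℝ => (gaussPoly k).eval y / Real.exp y :=
      (gaussPoly k).continuous.div Real.continuous_exp fun y => (Real.exp_pos y).ne'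
    obtain ⟨B, hB⟩ := (isCompact_Icc (a := (0 : ℝ)) (b := A)).exists_bound_of_continuousOn
      hc.continuousOn
    refine ⟨max 1 B, fun y hy => ?_⟩
    rcases le_total A y with h | h
    · exact (hA y h).le.trans (le_max_left _ _)
    · exact (hB y ⟨hy, h⟩).trans (le_max_right _ _)
  have hC0 : 0 ≤ C := (abs_nonneg _).trans (hC 0 le_rfl)
  refine ⟨(C + 1) * Real.exp 4, by positivity, fun y hy => ?_⟩
  -- completing the square: `y²/4 - 2y + 4 = (y/2 - 2)² ≥ 0`
  have h2 : Real.exp (-(y ^ 2 / 4)) ≤ Real.exp 4 * Real.exp (-y) * Real.exp (-y) := by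
    rw [← Real.exp_add, ← Real.exp_add, Real.exp_le_exp]
    nlinarith [sq_nonneg (y / 2 - 2)]
  have h3 := hC y hy
  rw [div_eq_mul_inv, ← Real.exp_neg, abs_mul, abs_of_pos (Real.exp_pos _)] at h3
  rw [gaussDer, abs_mul, abs_of_pos (Real.exp_pos _)]
  calc _ ≤ |(gaussPoly k).eval y| * (Real.exp 4 * Real.exp (-y) * Real.exp (-y)) := by gcongr
    _ = (|(gaussPoly k).eval y| * Real.exp (-y)) * (Real.exp 4 * Real.exp (-y)) := by ring
    _ ≤ (C + 1) * (Real.exp 4 * Real.exp (-y)) := by gcongr; linarith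
    _ = _ := by ring

lemma iteratedDeriv_gauss_scaled (q : ℝ) (k : ℕ) :
    iteratedDeriv k (fun z : ℝ => gaussDer 1 (z * q)) =
      fun z => q ^ k * gaussDer (k + 1) (z * q) := by
  induction k with
  | zero => simp
  | succ k ih =>
    rw [iteratedDeriv_succ, ih]
    funext z
    have h1 : HasDerivAt (fun z : ℝ => z * q) q z := by
      simpa using (hasDerivAt_id z).mul_const q
    have h2 := ((hasDerivAt_gaussDer (k + 1) (z * q)).comp z h1).const_mul (q ^ k)
    rw [show (fun z => q ^ k * gaussDer (k + 1) (z * q)) =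
      fun z => q ^ k * (gaussDer (k + 1) ∘ fun z => z * q) z from rfl, h2.deriv]
    ring

lemma integrand_eq {v : ℝ} (hv : 0 < v) (m : ℕ) (z : ℝ) :
    iteratedDeriv m (fun z : ℝ => z * Real.exp (-(z ^ 2 / (4 * v)))) z * v ^ (-(3 : ℝ) / 2) =
      -2 * (√v)⁻¹ ^ (m + 2) * gaussDer (m + 1) (z * (√v)⁻¹) := by
  have hr : 0 < √v := Real.sqrt_pos.2 hv
  have hsq : √v ^ 2 = v := Real.sq_sqrt hv.le
  have h1 : (fun z : ℝ => z * Real.exp (-(z ^ 2 / (4 * v)))) =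
      fun z => (-2 * √v) * gaussDer 1 (z * (√v)⁻¹) := by
    funext z
    have e : (z * (√v)⁻¹) ^ 2 / 4 = z ^ 2 / (4 * v) := by
      rw [mul_pow, inv_pow, hsq]; field_simp
    simp only [gaussDer, gaussPoly, e]
    simp
    field_simp
  have h2 : v ^ (-(3 : ℝ) / 2) = (√v)⁻¹ ^ 3 := by
    rw [Real.sqrt_eq_rpow, ← Real.rpow_neg hv.le, ← Real.rpow_natCast, ← Real.rpow_mul hv.le]
    norm_num
  rw [h1, h2, iteratedDeriv_const_mul_field, iteratedDeriv_gauss_scaled, pow_add]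
  field_simp

/-- The `v`-primitive of the integrand of `Ψ`. -/
lemma hasDerivAt_primitive {v : ℝ} (hv : 0 < v) (k : ℕ) (z : ℝ) :
    HasDerivAt (fun v : ℝ => -2 * ((√v)⁻¹ ^ (k + 1) * gaussDer k (z * (√v)⁻¹)))
      (-2 * (√v)⁻¹ ^ (k + 1 + 2) * gaussDer (k + 1 + 1) (z * (√v)⁻¹)) v := by
  have hr : 0 < √v := Real.sqrt_pos.2 hv
  have hq : HasDerivAt (fun v : ℝ => (√v)⁻¹) (-(√v)⁻¹ ^ 3 / 2) v := by
    refine ((Real.hasDerivAt_sqrt hv.ne').inv hr.ne').congr_deriv ?_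
    field_simp
  have h1 := (hasDerivAt_gaussDer k (z * (√v)⁻¹)).comp v (hq.const_mul z)
  have h2 := ((hq.pow (k + 1)).mul h1).const_mul (-2)
  refine h2.congr_deriv ?_
  rw [gaussDer_recurrence]
  simp
  ring

lemma tendsto_primitive (k : ℕ) {z : ℝ} (hz : 0 < z) :
    Filter.Tendsto (fun v : ℝ => -2 * ((√v)⁻¹ ^ (k + 1) * gaussDer k (z * (√v)⁻¹)))
      (nhdsWithin 0 (Set.Ioi 0)) (nhds 0) := by
  obtain ⟨C, hC, hb⟩ := gaussDer_bound k
  have hq : Filter.Tendsto (fun v : ℝ => (√v)⁻¹) (nhdsWithin 0 (Set.Ioi 0)) Filter.atTop := by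
    apply Filter.Tendsto.inv_tendsto_nhdsGT_zero
    refine tendsto_nhdsWithin_iff.2 ⟨?_, ?_⟩
    · have := (Real.continuous_sqrt.tendsto 0).mono_left (nhdsWithin_le_nhds (s := Set.Ioi 0))
      simpa using this
    · filter_upwards [self_mem_nhdsWithin] with v hv using Real.sqrt_pos.2 hv
  have h1 : Filter.Tendsto (fun q : ℝ => -2 * (q ^ (k + 1) * gaussDer k (z * q)))
      Filter.atTop (nhds 0) := by
    have h3 : Filter.Tendsto (fun q : ℝ => 2 * C * (q ^ (k + 1) * Real.exp (-z * q)))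
        Filter.atTop (nhds 0) := by
      have := (tendsto_rpow_mul_exp_neg_mul_atTop_nhds_zero ((k + 1 : ℕ) : ℝ) z hz).const_mul
        (2 * C)
      simpa only [Real.rpow_natCast, mul_zero] using this
    refine squeeze_zero_norm' ?_ h3
    filter_upwards [Filter.eventually_ge_atTop 0] with q hq
    have := hb (z * q) (by positivity)
    rw [Real.norm_eq_abs, abs_mul, abs_mul, abs_of_nonneg (pow_nonneg hq _)]
    norm_num
    calc 2 * (q ^ (k + 1) * |gaussDer k (z * q)|)
        ≤ 2 * (q ^ (k + 1) * (C * Real.exp (-(z * q)))) := by gcongr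
      _ = _ := by ring
  exact h1.comp hq

/-- Gaussian decay of `Ψ` at scale `√u`, weakened to exponential decay.
If the integrand were not integrable the integral would be `0` by convention and the bound
trivial, so integrability at `v = 0` needs no separate argument. -/
lemma PsiFn_bound (σ : ℝ) : ∃ C > 0, ∀ u : ℝ, 0 < u → ∀ z : ℝ, 0 < z →
    |PsiFn σ u z| ≤ C * (√u)⁻¹ ^ (mIdx σ) * Real.exp (-((√u)⁻¹ * z)) := by
  obtain ⟨C, hC, hb⟩ := gaussDer_bound ⌊σ⌋₊
  refine ⟨2 * C, by positivity, fun u hu z hz => ?_⟩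
  have hr : 0 < √u := Real.sqrt_pos.2 hu
  set k := ⌊σ⌋₊ with hk
  have hm : mIdx σ = k + 1 := rfl
  have h1 : PsiFn σ u z = ∫ v in Set.Ioc (0 : ℝ) u,
      -2 * (√v)⁻¹ ^ (k + 1 + 2) * gaussDer (k + 1 + 1) (z * (√v)⁻¹) := by
    rw [PsiFn, hm]
    exact setIntegral_congr_fun measurableSet_Ioc fun v hv => integrand_eq hv.1 _ z
  rw [h1, hm]
  by_cases hi : IntervalIntegrable (fun v : ℝ => -2 * (√v)⁻¹ ^ (k + 1 + 2) *
      gaussDer (k + 1 + 1) (z * (√v)⁻¹)) volume 0 u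
  · rw [← intervalIntegral.integral_of_le hu.le,
      intervalIntegral.integral_eq_sub_of_hasDerivAt_of_tendsto hu
        (fun v hv => hasDerivAt_primitive hv.1 k z) hi (tendsto_primitive k hz)
        ((hasDerivAt_primitive hu k z).continuousAt.tendsto.mono_left nhdsWithin_le_nhds)]
    have := hb (z * (√u)⁻¹) (by positivity)
    rw [sub_zero, abs_mul, abs_mul, abs_of_pos (pow_pos (inv_pos.2 hr) _)]
    norm_num only [abs_neg, abs_two]
    calc 2 * ((√u)⁻¹ ^ (k + 1) * |gaussDer k (z * (√u)⁻¹)|)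
        ≤ 2 * ((√u)⁻¹ ^ (k + 1) * (C * Real.exp (-(z * (√u)⁻¹)))) := by gcongr
      _ = _ := by rw [mul_comm z]; ring
  · rw [intervalIntegrable_iff_integrableOn_Ioc_of_le hu.le] at hi
    rw [integral_undef hi, abs_zero]
    positivity

lemma integrableOn_gamma {a q : ℝ} (ha : 0 < a) (hq : 0 < q) :
    IntegrableOn (fun s : ℝ => s ^ (a - 1) * Real.exp (-(q * s))) (Set.Ioi 0) := by
  have := integrableOn_rpow_mul_exp_neg_mul_rpow (s := a - 1) (p := 1) (b := q) (by linarith)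
    one_pos hq
  simpa only [Real.rpow_one, neg_mul] using this

lemma inner_bound (σ : ℝ) : ∃ K > 0, ∀ u : ℝ, 0 < u → ∀ t : ℝ, 0 < t →
    |∫ s in Set.Ioi (0 : ℝ), PsiFn σ u (t + s) * s ^ ((mIdx σ : ℝ) - σ - 1)| ≤
      K * (√u)⁻¹ ^ σ * Real.exp (-((√u)⁻¹ * t)) := by
  obtain ⟨C, hC, hb⟩ := PsiFn_bound σ
  have ha : 0 < (mIdx σ : ℝ) - σ := by
    have := Nat.lt_floor_add_one σ
    simp only [mIdx]; push_cast; linarith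
  refine ⟨C * Real.Gamma ((mIdx σ : ℝ) - σ), mul_pos hC (Real.Gamma_pos_of_pos ha),
    fun u hu t ht => ?_⟩
  have hq : 0 < (√u)⁻¹ := inv_pos.2 (Real.sqrt_pos.2 hu)
  have hu' := hb u hu
  set q := (√u)⁻¹
  set m := mIdx σ
  have hint := (integrableOn_gamma ha hq).const_mul (C * q ^ m * Real.exp (-(q * t)))
  have h1 := norm_integral_le_of_norm_le
    (f := fun s => PsiFn σ u (t + s) * s ^ ((m : ℝ) - σ - 1)) hint (by
      filter_upwards [ae_restrict_mem measurableSet_Ioi] with s hs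
      have hs : 0 < s := hs
      have := hu' (t + s) (by positivity)
      rw [Real.norm_eq_abs, abs_mul, abs_of_pos (Real.rpow_pos_of_pos hs _)]
      calc |PsiFn σ u (t + s)| * s ^ ((m : ℝ) - σ - 1)
          ≤ C * q ^ m * Real.exp (-(q * (t + s))) * s ^ ((m : ℝ) - σ - 1) := by gcongr
        _ = _ := by
          rw [show -(q * (t + s)) = -(q * t) + -(q * s) by ring, Real.exp_add]; ring)
  rw [Real.norm_eq_abs] at h1
  refine h1.trans (le_of_eq ?_)
  rw [integral_const_mul, Real.integral_rpow_mul_exp_neg_mul_Ioi ha hq]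
  have h2 : q ^ σ = q ^ m * (1 / q) ^ ((m : ℝ) - σ) := by
    rw [one_div, Real.inv_rpow hq.le, ← Real.rpow_neg hq.le, ← Real.rpow_natCast,
      ← Real.rpow_add hq]
    congr 1; ring
  rw [h2]; ring

/-- For `σ > 0` there is `C > 0` such that for every `u > 0`,
`(∫_0^∞ t^{2σ} |∫_0^∞ Ψ(u,t+s) s^{m-σ-1} ds|² dt/t)^{1/2} ≤ C`. -/
theorem Psi_uniform_bound (σ : ℝ) (hσ : 0 < σ) :
    ∃ C > 0, ∀ u : ℝ, 0 < u →
      (∫ t in Set.Ioi (0 : ℝ),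
          t ^ (2 * σ) *
            |∫ s in Set.Ioi (0 : ℝ), PsiFn σ u (t + s) * s ^ ((mIdx σ : ℝ) - σ - 1)| ^ 2 / t)
        ^ ((1 : ℝ) / 2) ≤ C := by
  obtain ⟨K, hK, hb⟩ := inner_bound σ
  have hG : 0 < Real.Gamma (2 * σ) := Real.Gamma_pos_of_pos (by positivity)
  refine ⟨(K ^ 2 * ((1 / 2 : ℝ) ^ (2 * σ) * Real.Gamma (2 * σ))) ^ ((1 : ℝ) / 2), by positivity,
    fun u hu => ?_⟩
  have hq : 0 < (√u)⁻¹ := inv_pos.2 (Real.sqrt_pos.2 hu)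
  have hu' := hb u hu
  set q := (√u)⁻¹
  have hσ2 : 0 < 2 * σ := by positivity
  have hq2 : 0 < 2 * q := by positivity
  have hint := (integrableOn_gamma hσ2 hq2).const_mul (K ^ 2 * (q ^ σ) ^ 2)
  have hnonneg : ∀ t ∈ Set.Ioi (0 : ℝ), 0 ≤ t ^ (2 * σ) *
      |∫ s in Set.Ioi (0 : ℝ), PsiFn σ u (t + s) * s ^ ((mIdx σ : ℝ) - σ - 1)| ^ 2 / t := by
    intro t ht
    have ht : 0 < t := ht
    positivity
  refine Real.rpow_le_rpow (setIntegral_nonneg measurableSet_Ioi hnonneg) ?_ (by norm_num)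
  have h1 := integral_mono_of_nonneg
    ((ae_restrict_mem measurableSet_Ioi).mono hnonneg) hint (by
      filter_upwards [ae_restrict_mem measurableSet_Ioi] with t ht
      have ht : 0 < t := ht
      have := hu' t ht
      calc _ ≤ t ^ (2 * σ) * (K * q ^ σ * Real.exp (-(q * t))) ^ 2 / t := by gcongr
        _ = _ := by
          rw [Real.rpow_sub_one ht.ne',
            show -(2 * q * t) = -(q * t) + -(q * t) by ring, Real.exp_add]
          ring)
  refine h1.trans (le_of_eq ?_)
  rw [integral_const_mul, Real.integral_rpow_mul_exp_neg_mul_Ioi hσ2 hq2]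
  have h2 : (q ^ σ) ^ 2 * (1 / (2 * q)) ^ (2 * σ) = (1 / 2 : ℝ) ^ (2 * σ) := by
    rw [← Real.rpow_natCast, ← Real.rpow_mul hq.le, mul_comm σ, Nat.cast_ofNat,
      ← Real.mul_rpow hq.le (by positivity)]
    congr 1
    field_simp
  rw [← h2]; ring
end

section
/- Let n ≥ 1, σ > 0 and β > 0. There exists C > 0 such that for all (x,y) in the region Ñ = {(x,y) ∈ ℝⁿ×ℝⁿ : |x-y| < 2n(n+3)/(1+|x|+|y|)} with x ≠ y, (∫_0^∞ |H_{β,σ}(x,y,t)|² dt/t)^{1/2} ≤ C (1+|x|^{1/2})/|x-y|^{n-1/2}. -/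
/-!
Everything is reduced to explicit pointwise bounds; write `r = |x - y|`.

*Fractional derivative.* By parabolic scaling the `m`-th derivative of `t e^{-t²/(4u)}` is
`u^{(1-m)/2} P(t/√u) e^{-t²/(4u)}` for a polynomial `P`, so giving up half of the Gaussian exponent
yields `|∂_t^σ[t e^{-t²/(4u)}]| ≤ C u^{(1-σ)/2} e^{-t²/(8u)}` (`fracDeriv_bound`).

*Kernel difference.* In the region, `r` and `r|x|` are bounded. Expanding the square in the Mehler
kernel gives `W^O = W^{-Δ} e^{η-z}` with `|η| ≤ 2nu + r² + 2r|x|` and `0 ≤ z ≤ 2u|x|²`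
(`ouKernel_eq_mul_euclidHeat`). For `u ≤ 1` this gives
`|e^{η-z} - 1| ≤ C (1+|x|^{1/2}) (u^{1/4} + r^{1/2})`, and `r^{1/2} ≤ C u^{1/4} e^{r²/(8u)}`. For
`u ≥ 1` both kernels are at most `1` and the factor `e^{-βu}` beats every power of `u`. In both
cases `e^{-βu} |W^O - W^{-Δ}| ≤ C (1+|x|^{1/2}) u^{-n/2+1/4} e^{-r²/(8u)}` (`kernel_diff_bound`).

*Integration.* The `u`-integral of the product of these bounds is a Gamma integral after `u ↦ 1/u`,
so that `|H(x,y,t)| ≤ C (1+|x|^{1/2}) t^σ (t²+r²)^{-(σ+n-1/2)/2}` (`Hkernel_pointwise`). The square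
of the right-hand side integrates against `dt/t` to a multiple of
`(1+|x|^{1/2})² r^{-(2n-1)}` (`integral_t_bound`).
-/

open Real MeasureTheory

/-- The σ-th fractional derivative in `t` of a function `F : (0,∞) → ℂ`. -/
noncomputable def fracDeriv (σ : ℝ) (F : ℝ → ℂ) (t : ℝ) : ℂ :=
  Complex.exp (-(Complex.I * (Real.pi : ℂ) * (((mIdx σ : ℝ) - σ : ℝ) : ℂ))) /
      Complex.Gamma (((mIdx σ : ℝ) - σ : ℝ) : ℂ) *
    ∫ s in Set.Ioi (0 : ℝ), iteratedDeriv (mIdx σ) F (t + s) * ((s ^ ((mIdx σ : ℝ) - σ - 1) : ℝ) : ℂ)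

/-- The Ornstein–Uhlenbeck (Mehler) kernel on `ℝⁿ`:
`W_u^O(x,y) = π^{-n/2}(1-e^{-4u})^{-n/2} exp(-|e^{-2u}x-y|²/(1-e^{-4u}))`. -/
noncomputable def ouKernel (n : ℕ) (u : ℝ)
    (x y : EuclideanSpace ℝ (Fin n)) : ℝ :=
  Real.pi ^ (-(n : ℝ) / 2) * (1 - Real.exp (-4 * u)) ^ (-(n : ℝ) / 2) *
    Real.exp (-‖Real.exp (-2 * u) • x - y‖ ^ 2 / (1 - Real.exp (-4 * u)))

/-- The Euclidean heat kernel `W_u^{-Δ}(z) = (4πu)^{-n/2} e^{-|z|²/(4u)}` on `ℝⁿ`. -/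
noncomputable def euclidHeat (n : ℕ) (u : ℝ) (z : EuclideanSpace ℝ (Fin n)) : ℝ :=
  (4 * Real.pi * u) ^ (-(n : ℝ) / 2) * Real.exp (-‖z‖ ^ 2 / (4 * u))

/-- The kernel `H_{β,σ}(x,y,t) = (t^σ/√(4π)) ∫_0^∞ ∂_t^σ[te^{-t²/(4u)}] u^{-3/2}
e^{-βu} (W_u^O(x,y) - W_u^{-Δ}(x-y)) du`. -/
noncomputable def Hkernel (n : ℕ) (β σ : ℝ)
    (x y : EuclideanSpace ℝ (Fin n)) (t : ℝ) : ℂ :=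
  ((t ^ σ / Real.sqrt (4 * Real.pi) : ℝ) : ℂ) *
    ∫ u in Set.Ioi (0 : ℝ),
      fracDeriv σ (fun t => (t : ℂ) * Complex.exp (-((t : ℂ) ^ 2 / (4 * (u : ℂ))))) t *
        ((u ^ (-(3 : ℝ) / 2) : ℝ) : ℂ) *
        ((Real.exp (-(β * u)) * (ouKernel n u x y - euclidHeat n u (x - y)) : ℝ) : ℂ)

/-! ### Fractional derivative of `t e^{-t²/(4u)}` -/

/-- The `m`-th derivative of `t e^{-c²t²/4}` is `c^{m-1} P(ct) e^{-c²t²/4}` with a polynomial `P`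
that does not depend on the scale `c`. -/
lemma exists_poly_iteratedDeriv (m : ℕ) : ∃ P : Polynomial ℂ, ∀ c : ℝ, c ≠ 0 →
    iteratedDeriv m (fun t : ℝ => (t : ℂ) * Complex.exp (-((c : ℂ) * t) ^ 2 / 4)) =
      fun t : ℝ => (c : ℂ)⁻¹ * (c : ℂ) ^ m * P.eval ((c : ℂ) * t) *
        Complex.exp (-((c : ℂ) * t) ^ 2 / 4) := by
  induction m with
  | zero =>
    refine ⟨Polynomial.X, fun c hc => ?_⟩
    have hc' : (c : ℂ) ≠ 0 := by exact_mod_cast hc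
    funext t
    simp [iteratedDeriv_zero]
    field_simp
  | succ k ih =>
    obtain ⟨P, hP⟩ := ih
    refine ⟨Polynomial.derivative P - Polynomial.C (1 / 2) * Polynomial.X * P, fun c hc => ?_⟩
    rw [iteratedDeriv_succ, hP c hc]
    funext t
    have h1 : HasDerivAt (fun t : ℝ => (c : ℂ) * (t : ℂ)) (c : ℂ) t := by
      simpa using (Complex.ofRealCLM.hasDerivAt (x := t)).const_mul (c : ℂ)
    have h2 : HasDerivAt (fun t : ℝ => P.eval ((c : ℂ) * t))
        ((Polynomial.derivative P).eval ((c : ℂ) * t) * c) t := by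
      have := HasDerivAt.comp (h₂ := fun z => P.eval z) t (P.hasDerivAt ((c : ℂ) * t)) h1
      exact this
    have h3 := (((h1.pow 2).neg).div_const 4).cexp
    have h4 := (h2.const_mul ((c : ℂ)⁻¹ * (c : ℂ) ^ k)).mul h3
    refine (h4.congr_deriv ?_).deriv
    simp only [Polynomial.eval_sub, Polynomial.eval_mul, Polynomial.eval_C, Polynomial.eval_X,
      Pi.pow_apply, Pi.neg_apply]
    push_cast
    ring

lemma poly_mul_exp_bounded (P : Polynomial ℂ) :
    ∃ C : ℝ, 0 ≤ C ∧ ∀ s : ℝ, ‖P.eval (s : ℂ)‖ ≤ C * rexp (s ^ 2 / 8) := by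
  induction P using Polynomial.induction_on' with
  | add p q hp hq =>
    obtain ⟨C₁, h₁, hp⟩ := hp
    obtain ⟨C₂, h₂, hq⟩ := hq
    refine ⟨C₁ + C₂, by positivity, fun s => ?_⟩
    rw [Polynomial.eval_add, add_mul]
    exact (norm_add_le _ _).trans (add_le_add (hp s) (hq s))
  | monomial k a =>
    refine ⟨‖a‖ * (k.factorial * rexp 2), by positivity, fun s => ?_⟩
    rw [Polynomial.eval_monomial, norm_mul, norm_pow, Complex.norm_real, Real.norm_eq_abs]
    have h1 := Real.pow_div_factorial_le_exp |s| (abs_nonneg s) k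
    rw [div_le_iff₀ (by positivity)] at h1
    have h2 : rexp |s| ≤ rexp 2 * rexp (s ^ 2 / 8) := by
      rw [← Real.exp_add]
      apply Real.exp_le_exp.2
      nlinarith [sq_nonneg (|s| - 4), sq_abs s]
    calc ‖a‖ * |s| ^ k ≤ ‖a‖ * (rexp |s| * k.factorial) := by gcongr
      _ ≤ ‖a‖ * (rexp 2 * rexp (s ^ 2 / 8) * k.factorial) := by gcongr
      _ = _ := by ring

lemma iteratedDeriv_bound (m : ℕ) : ∃ C : ℝ, 0 ≤ C ∧ ∀ u t : ℝ, 0 < u →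
    ‖iteratedDeriv m (fun t : ℝ => (t : ℂ) * Complex.exp (-((t : ℂ) ^ 2 / (4 * (u : ℂ))))) t‖ ≤
      C * u ^ ((1 - m : ℝ) / 2) * rexp (-(t ^ 2 / (8 * u))) := by
  obtain ⟨P, hP⟩ := exists_poly_iteratedDeriv m
  obtain ⟨C, hC, hb⟩ := poly_mul_exp_bounded P
  refine ⟨C, hC, fun u t hu => ?_⟩
  set c : ℝ := u ^ (-(1 / 2) : ℝ) with hcdef
  have hc : 0 < c := by positivity
  have hc2 : c ^ 2 = u⁻¹ := by
    rw [hcdef, ← Real.rpow_natCast, ← Real.rpow_mul hu.le]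
    norm_num
    exact Real.rpow_neg_one u
  have hfun : (fun t : ℝ => (t : ℂ) * Complex.exp (-((t : ℂ) ^ 2 / (4 * (u : ℂ))))) =
      fun t : ℝ => (t : ℂ) * Complex.exp (-((c : ℂ) * t) ^ 2 / 4) := by
    funext t
    have : (c : ℂ) ^ 2 = (u : ℂ)⁻¹ := by exact_mod_cast hc2
    congr 2
    rw [mul_pow, this]
    field_simp
  have hpow : c⁻¹ * c ^ m = u ^ ((1 - m : ℝ) / 2) := by
    rw [hcdef, ← Real.rpow_neg hu.le, ← Real.rpow_natCast, ← Real.rpow_mul hu.le,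
      ← Real.rpow_add hu]
    congr 1
    ring
  rw [hfun, hP c hc.ne']
  have he : ‖Complex.exp (-((c : ℂ) * t) ^ 2 / 4)‖ = rexp (-(t ^ 2 / (4 * u))) := by
    have : (-((c : ℂ) * t) ^ 2 / 4) = ((-(c * t) ^ 2 / 4 : ℝ) : ℂ) := by push_cast; ring
    rw [this, ← Complex.ofReal_exp, Complex.norm_real, Real.norm_eq_abs, Real.abs_exp]
    congr 1
    rw [mul_pow, hc2]
    field_simp
  have hbb := hb (c * t)
  rw [mul_pow, hc2] at hbb
  have hn : ‖(c : ℂ)⁻¹ * (c : ℂ) ^ m‖ = u ^ ((1 - m : ℝ) / 2) := by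
    rw [← hpow]
    have : (c : ℂ)⁻¹ * (c : ℂ) ^ m = ((c⁻¹ * c ^ m : ℝ) : ℂ) := by push_cast; ring
    rw [this, Complex.norm_real, Real.norm_of_nonneg (by positivity)]
  rw [norm_mul, norm_mul, he, hn]
  have hpe : ‖P.eval ((c : ℂ) * t)‖ ≤ C * rexp (u⁻¹ * t ^ 2 / 8) := by
    simpa using hbb
  calc u ^ ((1 - m : ℝ) / 2) * ‖P.eval ((c : ℂ) * t)‖ * rexp (-(t ^ 2 / (4 * u)))
      ≤ u ^ ((1 - m : ℝ) / 2) * (C * rexp (u⁻¹ * t ^ 2 / 8)) * rexp (-(t ^ 2 / (4 * u))) := by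
        gcongr
    _ = C * u ^ ((1 - m : ℝ) / 2) * (rexp (u⁻¹ * t ^ 2 / 8) * rexp (-(t ^ 2 / (4 * u)))) := by ring
    _ = _ := by
        rw [← Real.exp_add]
        congr 2
        field_simp
        ring

/-- The fractional derivative inherits the Gaussian decay, with the power of `u` dictated by
parabolic scaling. -/
lemma fracDeriv_bound (σ : ℝ) : ∃ C : ℝ, 0 ≤ C ∧ ∀ u t : ℝ, 0 < u → 0 < t →
    ‖fracDeriv σ (fun t : ℝ => (t : ℂ) * Complex.exp (-((t : ℂ) ^ 2 / (4 * (u : ℂ))))) t‖ ≤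
      C * u ^ ((1 - σ) / 2) * rexp (-(t ^ 2 / (8 * u))) := by
  obtain ⟨C, hC, hb⟩ := iteratedDeriv_bound (mIdx σ)
  have hm : 0 < (mIdx σ : ℝ) - σ := by
    have := Nat.lt_floor_add_one σ
    unfold mIdx
    push_cast
    linarith
  unfold fracDeriv
  set m := mIdx σ
  set α : ℝ := (m : ℝ) - σ with hα
  set k : ℂ := Complex.exp (-(Complex.I * (Real.pi : ℂ) * (α : ℂ))) / Complex.Gamma (α : ℂ)
  have hG : 0 < Real.Gamma (α / 2) := Real.Gamma_pos_of_pos (by positivity)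
  refine ⟨‖k‖ * (C * (8 ^ (α / 2) * (1 / 2) * Real.Gamma (α / 2))), by positivity,
    fun u t hu ht => ?_⟩
  rw [norm_mul]
  have hb8 : 0 < 1 / (8 * u) := by positivity
  have hint := integrableOn_rpow_mul_exp_neg_mul_rpow (p := 2) (s := α - 1) (b := 1 / (8 * u))
    (by linarith) two_pos hb8
  have hval := integral_rpow_mul_exp_neg_mul_rpow (p := 2) (q := α - 1) (b := 1 / (8 * u))
    two_pos (by linarith) hb8
  have key := MeasureTheory.norm_integral_le_of_norm_le
    (f := fun s : ℝ => iteratedDeriv m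
      (fun t : ℝ => (t : ℂ) * Complex.exp (-((t : ℂ) ^ 2 / (4 * (u : ℂ))))) (t + s) *
      ((s ^ (α - 1) : ℝ) : ℂ))
    (hint.const_mul (C * u ^ ((1 - m : ℝ) / 2) * rexp (-(t ^ 2 / (8 * u))))) (by
      filter_upwards [ae_restrict_mem measurableSet_Ioi] with s hs
      have hs : 0 < s := hs
      rw [norm_mul, Complex.norm_real, Real.norm_of_nonneg (by positivity)]
      have h1 := hb u (t + s) hu
      have h2 : rexp (-((t + s) ^ 2 / (8 * u))) ≤
          rexp (-(t ^ 2 / (8 * u))) * rexp (-(1 / (8 * u)) * s ^ (2 : ℝ)) := by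
        rw [← Real.exp_add]
        apply Real.exp_le_exp.2
        rw [Real.rpow_two]
        have : (t + s) ^ 2 / (8 * u) = t ^ 2 / (8 * u) + 1 / (8 * u) * s ^ 2
          + 2 * t * s / (8 * u) := by field_simp; ring
        have h0 : 0 ≤ 2 * t * s / (8 * u) := by positivity
        linarith
      calc _ ≤ (C * u ^ ((1 - m : ℝ) / 2) * (rexp (-(t ^ 2 / (8 * u))) *
            rexp (-(1 / (8 * u)) * s ^ (2 : ℝ)))) * s ^ (α - 1) := by
              gcongr
              exact h1.trans (by gcongr)
        _ = _ := by ring)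
  rw [integral_const_mul, hval] at key
  calc _ ≤ ‖k‖ * _ := mul_le_mul_of_nonneg_left key (norm_nonneg _)
    _ = _ := by
      have e1 : (1 / (8 * u)) ^ (-(α - 1 + 1) / 2) = 8 ^ (α / 2) * u ^ (α / 2) := by
        rw [one_div, ← Real.rpow_neg_one, ← Real.rpow_mul (by positivity),
          ← Real.mul_rpow (by norm_num) hu.le]
        congr 1
        ring
      have e2 : u ^ ((1 - σ) / 2) = u ^ ((1 - m : ℝ) / 2) * u ^ (α / 2) := by
        rw [← Real.rpow_add hu]
        congr 1
        rw [hα]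
        ring
      rw [e1, e2, sub_add_cancel]
      ring

/-! ### Integrals in `u` and `t` -/

/-- `∫₀^∞ u^{-a-1} e^{-c/u} du = c^{-a} Γ(a)`, by the substitution `u ↦ 1/u`. -/
lemma integral_inverse_gamma {a c : ℝ} (ha : 0 < a) (hc : 0 < c) :
    IntegrableOn (fun u : ℝ => u ^ (-a - 1) * rexp (-(c / u))) (Set.Ioi 0) ∧
      ∫ u in Set.Ioi (0 : ℝ), u ^ (-a - 1) * rexp (-(c / u)) = c ^ (-a) * Real.Gamma a := by
  have heq : Set.EqOn
      (fun x : ℝ => (|(-1 : ℝ)| * x ^ ((-1 : ℝ) - 1)) •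
        (fun t : ℝ => t ^ (a - 1) * rexp (-(c * t))) (x ^ (-1 : ℝ)))
      (fun u : ℝ => u ^ (-a - 1) * rexp (-(c / u))) (Set.Ioi 0) := by
    intro x hx
    have hx : 0 < x := hx
    simp only [abs_neg, abs_one, one_mul, smul_eq_mul]
    rw [← Real.rpow_mul hx.le, ← mul_assoc, ← Real.rpow_add hx, Real.rpow_neg_one,
      div_eq_mul_inv]
    congr 2
    ring
  have hint : IntegrableOn (fun t : ℝ => t ^ (a - 1) * rexp (-(c * t))) (Set.Ioi 0) := by
    have := integrableOn_rpow_mul_exp_neg_mul_rpow (p := 1) (s := a - 1) (b := c)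
      (by linarith) one_pos hc
    simpa using this
  constructor
  · exact ((integrableOn_Ioi_comp_rpow_iff _ (by norm_num : (-1 : ℝ) ≠ 0)).2 hint).congr_fun heq
      measurableSet_Ioi
  · rw [← setIntegral_congr_fun measurableSet_Ioi heq,
      integral_comp_rpow_Ioi (fun t : ℝ => t ^ (a - 1) * rexp (-(c * t)))
        (by norm_num : (-1 : ℝ) ≠ 0),
      Real.integral_rpow_mul_exp_neg_mul_Ioi ha hc, one_div, Real.inv_rpow hc.le,
      Real.rpow_neg hc.le]

/-- The weighted `L²` integral in `t`. The integrand is dominated by `t^{2σ-1} r^{-2σ-2p}` for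
`t ≤ r` and by `t^{-2p-1}` for `t > r`; no measurability of `f` is required. -/
lemma integral_t_bound {σ p r A : ℝ} (hσ : 0 < σ) (hp : 0 < p) (hr : 0 < r)
    {f : ℝ → ℝ} (hf0 : ∀ t, 0 < t → 0 ≤ f t)
    (hf : ∀ t, 0 < t → f t ≤ A * (t ^ σ * (t ^ 2 + r ^ 2) ^ (-((σ + p) / 2)))) :
    ∫ t in Set.Ioi (0 : ℝ), f t ^ 2 / t ≤
      A ^ 2 * (1 / (2 * σ) + 1 / (2 * p)) * r ^ (-(2 * p)) := by
  have hpt : ∀ t, 0 < t → f t ^ 2 / t ≤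
      A ^ 2 * (t ^ (2 * σ - 1) * (t ^ 2 + r ^ 2) ^ (-(σ + p))) := by
    intro t ht
    have h1 : f t ^ 2 ≤ (A * (t ^ σ * (t ^ 2 + r ^ 2) ^ (-((σ + p) / 2)))) ^ 2 :=
      pow_le_pow_left₀ (hf0 t ht) (hf t ht) 2
    have h2 : (t ^ σ) ^ 2 = t ^ (2 * σ - 1) * t := by
      rw [← Real.rpow_natCast, ← Real.rpow_mul ht.le, ← Real.rpow_add_one ht.ne']
      congr 1
      push_cast
      ring
    have h3 : ((t ^ 2 + r ^ 2) ^ (-((σ + p) / 2))) ^ 2 = (t ^ 2 + r ^ 2) ^ (-(σ + p)) := by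
      rw [← Real.rpow_natCast, ← Real.rpow_mul (by positivity)]
      congr 1
      push_cast
      ring
    rw [div_le_iff₀ ht]
    calc _ ≤ _ := h1
      _ = _ := by rw [mul_pow, mul_pow, h2, h3]; ring
  have hsq : ∀ s : ℝ, 0 < s → (s ^ 2) ^ (-(σ + p)) = s ^ (-(2 * σ) - 2 * p) := by
    intro s hs
    rw [← Real.rpow_natCast, ← Real.rpow_mul hs.le]
    congr 1
    push_cast
    ring
  have hi1 : IntegrableOn (fun t : ℝ => t ^ (2 * σ - 1)) (Set.Ioc 0 r) :=
    (intervalIntegrable_iff_integrableOn_Ioc_of_le hr.le).1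
      (intervalIntegral.intervalIntegrable_rpow' (by linarith))
  have hi2 : IntegrableOn (fun t : ℝ => t ^ (-(2 * p) - 1)) (Set.Ioi r) :=
    integrableOn_Ioi_rpow_of_lt (by linarith) hr
  have hv1 : ∫ t in Set.Ioc 0 r, t ^ (2 * σ - 1) = r ^ (2 * σ) / (2 * σ) := by
    rw [← intervalIntegral.integral_of_le hr.le, integral_rpow (Or.inl (by linarith)),
      sub_add_cancel, Real.zero_rpow (by positivity), sub_zero]
  have hv2 : ∫ t in Set.Ioi r, t ^ (-(2 * p) - 1) = r ^ (-(2 * p)) / (2 * p) := by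
    rw [integral_Ioi_rpow_of_lt (by linarith) hr, sub_add_cancel, neg_div_neg_eq]
  let g : ℝ → ℝ := fun t => A ^ 2 *
    ((Set.Ioc 0 r).indicator (fun t => r ^ (-(2 * σ) - 2 * p) * t ^ (2 * σ - 1)) t +
      (Set.Ioi r).indicator (fun t => t ^ (-(2 * p) - 1)) t)
  have hg1 : Integrable ((Set.Ioc 0 r).indicator
      (fun t : ℝ => r ^ (-(2 * σ) - 2 * p) * t ^ (2 * σ - 1))) :=
    (integrable_indicator_iff measurableSet_Ioc).2 (hi1.const_mul _)
  have hg2 : Integrable ((Set.Ioi r).indicator (fun t : ℝ => t ^ (-(2 * p) - 1))) :=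
    (integrable_indicator_iff measurableSet_Ioi).2 hi2
  have hg : Integrable g := (hg1.add hg2).const_mul _
  have hgnn : ∀ t, 0 ≤ g t := by
    intro t
    refine mul_nonneg (sq_nonneg A) (add_nonneg ?_ ?_)
    · refine Set.indicator_nonneg (fun s hs => ?_) t
      have := hs.1
      positivity
    · refine Set.indicator_nonneg (fun s hs => ?_) t
      have : 0 < s := hr.trans hs
      positivity
  have hfg : ∀ t, 0 < t → f t ^ 2 / t ≤ g t := by
    intro t ht
    refine (hpt t ht).trans (mul_le_mul_of_nonneg_left ?_ (sq_nonneg A))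
    rcases le_or_gt t r with h | h
    · rw [Set.indicator_of_mem (show t ∈ Set.Ioc 0 r from ⟨ht, h⟩),
        Set.indicator_of_notMem (by simpa using h), add_zero, ← hsq r hr, mul_comm]
      refine mul_le_mul_of_nonneg_right ?_ (by positivity)
      exact Real.rpow_le_rpow_of_nonpos (by positivity) (by nlinarith) (by linarith)
    · rw [Set.indicator_of_notMem (by simp [h]), Set.indicator_of_mem (show t ∈ Set.Ioi r from h),
        zero_add]
      have : t ^ (-(2 * p) - 1) = t ^ (2 * σ - 1) * (t ^ 2) ^ (-(σ + p)) := by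
        rw [hsq t ht, ← Real.rpow_add ht]
        congr 1
        ring
      rw [this]
      refine mul_le_mul_of_nonneg_left ?_ (by positivity)
      exact Real.rpow_le_rpow_of_nonpos (by positivity) (by nlinarith) (by linarith)
  calc ∫ t in Set.Ioi (0 : ℝ), f t ^ 2 / t ≤ ∫ t in Set.Ioi (0 : ℝ), g t := by
        refine integral_mono_of_nonneg ?_ hg.integrableOn ?_
        · filter_upwards [ae_restrict_mem measurableSet_Ioi] with t ht
          have : 0 < t := ht
          simp only [Pi.zero_apply]
          positivity
        · filter_upwards [ae_restrict_mem measurableSet_Ioi] with t ht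
          exact hfg t ht
    _ ≤ ∫ t, g t := setIntegral_le_integral hg (ae_of_all _ hgnn)
    _ = _ := by
        rw [integral_const_mul, integral_add hg1 hg2, integral_indicator measurableSet_Ioc,
          integral_indicator measurableSet_Ioi, integral_const_mul, hv1, hv2]
        have : r ^ (-(2 * p)) = r ^ (-(2 * σ) - 2 * p) * r ^ (2 * σ) := by
          rw [← Real.rpow_add hr]
          congr 1
          ring
        rw [this]
        ring

/-! ### Comparison of the Mehler and heat kernels -/

lemma abs_exp_sub_one_le_mul_exp (s : ℝ) : |rexp s - 1| ≤ |s| * rexp |s| := by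
  have h1 := Real.add_one_le_exp s
  have h2 := Real.add_one_le_exp (-s)
  have h3 : rexp (-s) * rexp s = 1 := by rw [← Real.exp_add]; simp
  have h4 : rexp s ≤ rexp |s| := Real.exp_le_exp.2 (le_abs_self s)
  have h5 : 1 ≤ rexp |s| := Real.one_le_exp (abs_nonneg s)
  have h6 := Real.exp_pos s
  rw [abs_le]
  constructor
  · nlinarith [abs_nonneg s, neg_abs_le s]
  · have : rexp s - 1 ≤ s * rexp s := by nlinarith
    nlinarith [abs_nonneg s, le_abs_self s]

lemma one_sub_exp_neg_le {v : ℝ} (hv : 0 < v) :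
    0 < 1 - rexp (-v) ∧ 1 - rexp (-v) ≤ v ∧ v / (1 - rexp (-v)) ≤ 1 + v := by
  have h1 := Real.add_one_le_exp v
  have h2 := Real.add_one_le_exp (-v)
  have h3 : rexp (-v) * rexp v = 1 := by rw [← Real.exp_add]; simp
  have h4 : rexp (-v) < 1 := by rw [← Real.exp_zero]; exact Real.exp_lt_exp.2 (by linarith)
  have h5 := Real.exp_pos (-v)
  refine ⟨by linarith, by linarith, ?_⟩
  rw [div_le_iff₀ (by linarith)]
  nlinarith

/-- The Mehler kernel as a multiple of the heat kernel. The factor splits as `e^η e^{-z}` where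
`η` is small in absolute value near the diagonal, while `z ≥ 0` may be large. -/
lemma ouKernel_eq_mul_euclidHeat (n : ℕ) (u : ℝ) (hu : 0 < u) (x y : EuclideanSpace ℝ (Fin n)) :
    ∃ η z : ℝ, ouKernel n u x y = euclidHeat n u (x - y) * (rexp η * rexp (-z)) ∧
      |η| ≤ 2 * n * u + ‖x - y‖ ^ 2 + 2 * (‖x - y‖ * ‖x‖) ∧ 0 ≤ z ∧ z ≤ 2 * u * ‖x‖ ^ 2 := by
  obtain ⟨hE, hEv, hvE⟩ := one_sub_exp_neg_le (v := 4 * u) (by positivity)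
  obtain ⟨ha, hau, -⟩ := one_sub_exp_neg_le (v := 2 * u) (by positivity)
  set e := rexp (-(2 * u)) with he
  set E := 1 - rexp (-(4 * u)) with hEdef
  set a := 1 - e with hadef
  have he0 : 0 < e := Real.exp_pos _
  have hEe : E = a * (1 + e) := by
    have : rexp (-(4 * u)) = e * e := by rw [he, ← Real.exp_add]; congr 1; ring
    rw [hEdef, this, hadef]; ring
  set d := x - y with hd
  set i := inner ℝ d x with hi
  have hii : |i| ≤ ‖d‖ * ‖x‖ := abs_real_inner_le_norm d x
  have hnorm : ‖e • x - y‖ ^ 2 = ‖d‖ ^ 2 - 2 * (a * i) + a ^ 2 * ‖x‖ ^ 2 := by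
    have : e • x - y = d - a • x := by rw [hd, hadef, sub_smul, one_smul]; abel
    rw [this, norm_sub_sq_real, inner_smul_right, norm_smul, mul_pow, Real.norm_eq_abs, sq_abs]
  set r := ‖d‖ with hr
  have hr0 : 0 ≤ r := norm_nonneg d
  set δ := r ^ 2 / (4 * u) - r ^ 2 / E + 2 * (a * i) / E with hδ
  have hlog0 : 0 ≤ Real.log (4 * u / E) := Real.log_nonneg (by rw [le_div_iff₀ hE]; linarith)
  have hlog1 : Real.log (4 * u / E) ≤ 4 * u := by
    have := Real.log_le_sub_one_of_pos (show 0 < 4 * u / E by positivity)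
    linarith
  refine ⟨(n : ℝ) / 2 * Real.log (4 * u / E) + δ, a ^ 2 * ‖x‖ ^ 2 / E, ?_, ?_, by positivity, ?_⟩
  · have e1 : rexp ((n : ℝ) / 2 * Real.log (4 * u / E)) = E ^ (-(n : ℝ) / 2) *
        (4 * u) ^ ((n : ℝ) / 2) := by
      rw [mul_comm, ← Real.rpow_def_of_pos (by positivity), Real.div_rpow (by positivity) hE.le,
        neg_div, Real.rpow_neg hE.le]
      field_simp
    have e2 : (4 * Real.pi * u) ^ (-(n : ℝ) / 2) = Real.pi ^ (-(n : ℝ) / 2) *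
        (4 * u) ^ (-(n : ℝ) / 2) := by
      rw [← Real.mul_rpow Real.pi_pos.le (by positivity)]
      congr 1; ring
    have e3 : (4 * u) ^ (-(n : ℝ) / 2) * (4 * u) ^ ((n : ℝ) / 2) = 1 := by
      rw [← Real.rpow_add (by positivity)]
      have : -(n : ℝ) / 2 + n / 2 = 0 := by ring
      rw [this, Real.rpow_zero]
    have e4 : rexp (-(r ^ 2 - 2 * (a * i) + a ^ 2 * ‖x‖ ^ 2) / E) =
        rexp (-r ^ 2 / (4 * u)) * rexp δ * rexp (-(a ^ 2 * ‖x‖ ^ 2 / E)) := by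
      rw [← Real.exp_add, ← Real.exp_add, hδ]
      congr 1
      ring
    have q1 : -4 * u = -(4 * u) := by ring
    have q2 : -2 * u = -(2 * u) := by ring
    unfold ouKernel euclidHeat
    rw [q1, q2, ← he, ← hEdef, hnorm, e4, Real.exp_add _ δ, e1, e2]
    calc _ = Real.pi ^ (-(n : ℝ) / 2) * E ^ (-(n : ℝ) / 2) * (rexp (-r ^ 2 / (4 * u)) * rexp δ *
        rexp (-(a ^ 2 * ‖x‖ ^ 2 / E))) * 1 := by ring
      _ = _ := by rw [← e3]; ring
  · have h1 : |δ| ≤ r ^ 2 + 2 * (r * ‖x‖) := by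
      have hA : |r ^ 2 / (4 * u) - r ^ 2 / E| ≤ r ^ 2 := by
        have : r ^ 2 / (4 * u) - r ^ 2 / E = - (r ^ 2 * ((4 * u / E - 1) / (4 * u))) := by
          field_simp
          ring
        rw [this, abs_neg]
        have h0 : 0 ≤ (4 * u / E - 1) / (4 * u) := by
          apply div_nonneg _ (by positivity)
          rw [sub_nonneg, le_div_iff₀ hE]; linarith
        have h1 : (4 * u / E - 1) / (4 * u) ≤ 1 := by
          rw [div_le_one (by positivity)]; linarith
        rw [abs_of_nonneg (by positivity)]
        exact mul_le_of_le_one_right (by positivity) h1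
      have hB : |2 * (a * i) / E| ≤ 2 * (r * ‖x‖) := by
        have : 2 * (a * i) / E = 2 * i / (1 + e) := by
          rw [hEe]; field_simp
        rw [this, abs_div, abs_mul, abs_of_pos (show (0 : ℝ) < 1 + e by positivity),
          abs_of_pos (two_pos : (0 : ℝ) < 2)]
        rw [div_le_iff₀ (by positivity)]
        nlinarith [mul_nonneg hr0 (norm_nonneg x), abs_nonneg i]
      calc |δ| ≤ _ := abs_add_le _ _
        _ ≤ _ := add_le_add hA hB
    have h2 : |(n : ℝ) / 2 * Real.log (4 * u / E)| ≤ 2 * n * u := by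
      rw [abs_of_nonneg (by positivity)]
      calc (n : ℝ) / 2 * Real.log (4 * u / E) ≤ (n : ℝ) / 2 * (4 * u) := by gcongr
        _ = _ := by ring
    have := abs_add_le ((n : ℝ) / 2 * Real.log (4 * u / E)) δ
    linarith
  · have : a ^ 2 * ‖x‖ ^ 2 / E = a / (1 + e) * ‖x‖ ^ 2 := by
      rw [hEe]; field_simp
    rw [this]
    gcongr
    rw [div_le_iff₀ (by positivity)]
    nlinarith

/-- With `w = u^{1/4}` and `ρ = r^{1/2}` the exponent is `r²/(8u)`: the Gaussian turns a factor
`r^{1/2}` into `u^{1/4}`. -/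
lemma sqrt_le_mul_exp {w ρ : ℝ} (hw : 0 < w) :
    ρ ≤ 8 * (w * rexp (ρ ^ 4 / (8 * w ^ 4))) := by
  have h1 := Real.add_one_le_exp (ρ ^ 4 / (8 * w ^ 4))
  have h2 : ρ / w ≤ 8 * (ρ ^ 4 / (8 * w ^ 4) + 1) := by
    have : 8 * (ρ ^ 4 / (8 * w ^ 4) + 1) = (ρ / w) ^ 4 + 8 := by field_simp
    rw [this]
    set q := ρ / w
    nlinarith [sq_nonneg (q ^ 2 - 1), sq_nonneg (q - 1)]
  rw [div_le_iff₀ hw] at h2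
  nlinarith

lemma le_of_sq_le_of_one_le {s K : ℝ} (hK : 1 ≤ K) (h : s ^ 2 ≤ K) : s ≤ K := by
  nlinarith [sq_nonneg (s - 1)]

lemma four_terms_le {ξ ρ w N K : ℝ} (hξ : 0 ≤ ξ) (hρ : 0 ≤ ρ) (hw : 0 ≤ w) (hN : 0 ≤ N)
    (hK : 0 ≤ K) : 2 * (w * ξ) + 2 * N * w + K ^ 3 * ρ + 2 * K * (ρ * ξ) ≤
      (2 + 2 * N + K ^ 3 + 2 * K) * ((1 + ξ) * (w + ρ)) := by
  have h1 : 0 ≤ ξ * ρ := by positivity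
  have h2 : 0 ≤ ξ * w := by positivity
  have hQ : (1 + ξ) * (w + ρ) = w + ρ + ξ * w + ξ * ρ := by ring
  set Q := (1 + ξ) * (w + ρ)
  have p1 : w * ξ ≤ Q := by linarith
  have p2 : 2 * N * w ≤ 2 * N * Q := by gcongr; linarith
  have p3 : K ^ 3 * ρ ≤ K ^ 3 * Q := by gcongr; linarith
  have p4 : 2 * K * (ρ * ξ) ≤ 2 * K * Q := by gcongr; linarith
  linarith

/-- For `u ≤ 1` no damping factor is needed: the gain comes from cancellation between the two
kernels. -/
lemma kernel_diff_small (n : ℕ) (K : ℝ) (hK : 1 ≤ K) :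
    ∃ C : ℝ, 0 ≤ C ∧ ∀ (u : ℝ) (x y : EuclideanSpace ℝ (Fin n)), 0 < u → u ≤ 1 →
      ‖x - y‖ ≤ K → ‖x - y‖ * ‖x‖ ≤ K →
      |ouKernel n u x y - euclidHeat n u (x - y)| ≤
        C * (1 + ‖x‖ ^ ((1 : ℝ) / 2)) * u ^ (-(n : ℝ) / 2 + 1 / 4) *
          rexp (-(‖x - y‖ ^ 2 / (8 * u))) := by
  set M : ℝ := 2 * n + K ^ 2 + 2 * K with hM
  refine ⟨9 * (rexp M * (2 + 2 * n + K ^ 3 + 2 * K)), by positivity,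
    fun u x y hu hu1 hrK hrx => ?_⟩
  obtain ⟨η, z, hou, hη, hz0, hz⟩ := ouKernel_eq_mul_euclidHeat n u hu x y
  set r := ‖x - y‖ with hr
  set X := ‖x‖ with hX
  have hr0 : 0 ≤ r := norm_nonneg _
  have hX0 : 0 ≤ X := norm_nonneg _
  have hn0 : (0 : ℝ) ≤ n := n.cast_nonneg
  rw [← Real.sqrt_eq_rpow]
  set ξ := √X with hξ
  set ρ := √r with hρ
  have hξ0 : 0 ≤ ξ := Real.sqrt_nonneg _
  have hρ0 : 0 ≤ ρ := Real.sqrt_nonneg _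
  have hξ2 : ξ ^ 2 = X := Real.sq_sqrt hX0
  have hρ2 : ρ ^ 2 = r := Real.sq_sqrt hr0
  set w := u ^ ((1 : ℝ) / 4) with hw
  have hw0 : 0 < w := by positivity
  have hw4 : w ^ 4 = u := by
    rw [hw, ← Real.rpow_natCast, ← Real.rpow_mul hu.le]; norm_num
  have hw1 : w ≤ 1 := Real.rpow_le_one hu.le hu1 (by norm_num)
  -- sizes of the pieces of the exponent, in terms of `w = u^{1/4}` and `ρ = r^{1/2}`
  have huw : u ≤ w := by
    rw [← hw4]
    exact pow_le_of_le_one hw0.le hw1 (by norm_num)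
  have hρK : ρ ≤ K := le_of_sq_le_of_one_le hK (hρ2.trans_le hrK)
  have hr2 : r ^ 2 ≤ K ^ 3 * ρ := by
    rw [← hρ2]
    calc (ρ ^ 2) ^ 2 = ρ ^ 3 * ρ := by ring
      _ ≤ K ^ 3 * ρ := by gcongr
  have hρξ : ρ * ξ ≤ K :=
    le_of_sq_le_of_one_le hK (by rwa [mul_pow, hρ2, hξ2])
  have hrX : r * X ≤ K * (ρ * ξ) := by
    have : (ρ * ξ) * (ρ * ξ) = r * X := by rw [← hρ2, ← hξ2]; ring
    rw [← this]
    gcongr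
  have hηM : |η| ≤ M := by
    have h1 : r ^ 2 ≤ K ^ 2 := by gcongr
    have h2 : 2 * n * u ≤ 2 * n := mul_le_of_le_one_right (by positivity) hu1
    linarith
  have hη' : |η| ≤ 2 * n * w + K ^ 3 * ρ + 2 * (K * (ρ * ξ)) := by
    have : 2 * n * u ≤ 2 * n * w := by gcongr
    linarith
  have hzb : |rexp (-z) - 1| ≤ 2 * (w * ξ) := by
    have h1 := Real.add_one_le_exp (-z)
    have h2 : rexp (-z) ≤ 1 := Real.exp_le_one_iff.2 (by linarith)
    rw [abs_sub_comm, abs_of_nonneg (by linarith)]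
    have hz4 : z ≤ 2 * (w * ξ) ^ 4 := by
      calc z ≤ _ := hz
        _ = _ := by rw [← hw4, ← hξ2]; ring
    -- `1 - e^{-z} ≤ min(1, z)`, with `min(1, q⁴) ≤ q` for `q = wξ`
    rcases le_or_gt (w * ξ) 1 with h | h
    · have : (w * ξ) ^ 4 ≤ w * ξ := pow_le_of_le_one (by positivity) h (by norm_num)
      linarith
    · linarith [Real.exp_pos (-z)]
  have hfac : |rexp η * rexp (-z) - 1| ≤
      rexp M * (2 + 2 * n + K ^ 3 + 2 * K) * ((1 + ξ) * (w + ρ)) := by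
    have h1 : rexp η ≤ rexp M := Real.exp_le_exp.2 ((le_abs_self η).trans hηM)
    have h2 : |rexp η - 1| ≤ |η| * rexp M :=
      (abs_exp_sub_one_le_mul_exp η).trans (by gcongr)
    have h3 : rexp η * rexp (-z) - 1 = rexp η * (rexp (-z) - 1) + (rexp η - 1) := by ring
    calc |rexp η * rexp (-z) - 1| ≤ |rexp η * (rexp (-z) - 1)| + |rexp η - 1| := by
          rw [h3]; exact abs_add_le _ _
      _ ≤ rexp M * (2 * (w * ξ)) + (2 * n * w + K ^ 3 * ρ + 2 * (K * (ρ * ξ))) * rexp M := by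
          rw [abs_mul, Real.abs_exp]
          gcongr
          exact h2.trans (by gcongr)
      _ = rexp M * (2 * (w * ξ) + 2 * n * w + K ^ 3 * ρ + 2 * K * (ρ * ξ)) := by ring
      _ ≤ rexp M * ((2 + 2 * n + K ^ 3 + 2 * K) * ((1 + ξ) * (w + ρ))) := by
          gcongr
          exact four_terms_le hξ0 hρ0 hw0.le hn0 (by linarith)
      _ = _ := by ring
  have hsum : w + ρ ≤ 9 * (w * rexp (r ^ 2 / (8 * u))) := by
    have h1 := sqrt_le_mul_exp (w := w) (ρ := ρ) hw0
    have h2 : ρ ^ 4 / (8 * w ^ 4) = r ^ 2 / (8 * u) := by rw [hw4, ← hρ2]; ring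
    rw [h2] at h1
    have h3 : w * 1 ≤ w * rexp (r ^ 2 / (8 * u)) :=
      mul_le_mul_of_nonneg_left (Real.one_le_exp (by positivity)) hw0.le
    linarith
  have heat : euclidHeat n u (x - y) ≤ u ^ (-(n : ℝ) / 2) * rexp (-(r ^ 2 / (4 * u))) := by
    unfold euclidHeat
    rw [← hr, neg_div (4 * u) (r ^ 2)]
    gcongr ?_ * _
    refine Real.rpow_le_rpow_of_nonpos hu ?_ ?_
    · have := mul_le_mul_of_nonneg_left Real.pi_gt_three.le hu.le
      linarith
    · rw [neg_div]; linarith [div_nonneg hn0 (two_pos (α := ℝ)).le]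
  have heat0 : 0 ≤ euclidHeat n u (x - y) := by unfold euclidHeat; positivity
  have hD : ouKernel n u x y - euclidHeat n u (x - y) =
      euclidHeat n u (x - y) * (rexp η * rexp (-z) - 1) := by rw [hou]; ring
  rw [hD, abs_mul, abs_of_nonneg heat0]
  calc _ ≤ u ^ (-(n : ℝ) / 2) * rexp (-(r ^ 2 / (4 * u))) *
        (rexp M * (2 + 2 * n + K ^ 3 + 2 * K) *
          ((1 + ξ) * (9 * (w * rexp (r ^ 2 / (8 * u)))))) := by
        apply mul_le_mul heat _ (abs_nonneg _) (by positivity)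
        refine hfac.trans ?_
        gcongr
    _ = 9 * (rexp M * (2 + 2 * n + K ^ 3 + 2 * K)) * (1 + ξ) * (u ^ (-(n : ℝ) / 2) * w) *
        (rexp (-(r ^ 2 / (4 * u))) * rexp (r ^ 2 / (8 * u))) := by ring
    _ = _ := by
        rw [← Real.exp_add, hw, ← Real.rpow_add hu]
        congr 2
        field_simp
        ring

/-- For `u ≥ 1` there is no cancellation: both kernels are at most `1`, and `e^{-βu}` provides the
decay in `u`. -/
lemma kernel_diff_large (n : ℕ) (β K : ℝ) (hβ : 0 < β) :
    ∃ C : ℝ, 0 ≤ C ∧ ∀ (u : ℝ) (x y : EuclideanSpace ℝ (Fin n)), 1 ≤ u → ‖x - y‖ ≤ K →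
      rexp (-(β * u)) * |ouKernel n u x y - euclidHeat n u (x - y)| ≤
        C * u ^ (-(n : ℝ) / 2 + 1 / 4) * rexp (-(‖x - y‖ ^ 2 / (8 * u))) := by
  refine ⟨n.factorial / β ^ n * rexp (K ^ 2 / 8), by positivity, fun u x y hu hrK => ?_⟩
  have hu0 : 0 < u := by linarith
  have hn0 : (0 : ℝ) ≤ n := n.cast_nonneg
  obtain ⟨hE, -, hvE⟩ := one_sub_exp_neg_le (v := 4 * u) (by positivity)
  have q1 : -4 * u = -(4 * u) := by ring
  have hneg : -(n : ℝ) / 2 ≤ 0 := by rw [neg_div]; linarith [div_nonneg hn0 (two_pos (α := ℝ)).le]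
  have ho : 0 ≤ ouKernel n u x y ∧ ouKernel n u x y ≤ 1 := by
    unfold ouKernel
    rw [q1]
    refine ⟨by positivity, ?_⟩
    apply mul_le_one₀ _ (by positivity)
    · apply Real.exp_le_one_iff.2
      rw [neg_div, neg_nonpos]
      positivity
    · rw [← Real.mul_rpow Real.pi_pos.le hE.le]
      refine Real.rpow_le_one_of_one_le_of_nonpos ?_ hneg
      rw [div_le_iff₀ hE] at hvE
      have := Real.pi_gt_three
      have h5 : 4 / 5 ≤ 1 - rexp (-(4 * u)) := by nlinarith
      nlinarith
  have hh : 0 ≤ euclidHeat n u (x - y) ∧ euclidHeat n u (x - y) ≤ 1 := by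
    unfold euclidHeat
    refine ⟨by positivity, ?_⟩
    apply mul_le_one₀ _ (by positivity)
    · apply Real.exp_le_one_iff.2
      rw [neg_div, neg_nonpos]
      positivity
    · refine Real.rpow_le_one_of_one_le_of_nonpos ?_ hneg
      nlinarith [Real.pi_gt_three]
  have hD : |ouKernel n u x y - euclidHeat n u (x - y)| ≤ 1 := by
    rw [abs_le]; constructor <;> linarith [ho.1, ho.2, hh.1, hh.2]
  have h1 : rexp (-(β * u)) ≤ n.factorial / β ^ n * u ^ (-(n : ℝ)) := by
    have := Real.pow_div_factorial_le_exp (β * u) (by positivity) n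
    rw [Real.exp_neg, Real.rpow_neg hu0.le, Real.rpow_natCast, ← div_eq_mul_inv, div_div,
      ← mul_pow, ← inv_div]
    exact inv_anti₀ (by positivity) this
  have h2 : u ^ (-(n : ℝ)) ≤ u ^ (-(n : ℝ) / 2 + 1 / 4) :=
    Real.rpow_le_rpow_of_exponent_le hu (by linarith)
  have h3 : 1 ≤ rexp (K ^ 2 / 8) * rexp (-(‖x - y‖ ^ 2 / (8 * u))) := by
    rw [← Real.exp_add]
    apply Real.one_le_exp
    have : ‖x - y‖ ^ 2 / (8 * u) ≤ K ^ 2 / 8 := by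
      gcongr
      linarith
    linarith
  calc _ ≤ rexp (-(β * u)) * 1 := by gcongr
    _ ≤ n.factorial / β ^ n * u ^ (-(n : ℝ) / 2 + 1 / 4) * 1 := by
        rw [mul_one, mul_one]
        exact h1.trans (by gcongr)
    _ ≤ n.factorial / β ^ n * u ^ (-(n : ℝ) / 2 + 1 / 4) *
        (rexp (K ^ 2 / 8) * rexp (-(‖x - y‖ ^ 2 / (8 * u)))) := by gcongr
    _ = _ := by ring

/-- The kernel difference, damped by `e^{-βu}`, gains the factor `(1+|x|^{1/2}) u^{1/4}` over the
heat kernel near the diagonal, uniformly in `u > 0`. -/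
lemma kernel_diff_bound (n : ℕ) (β K : ℝ) (hβ : 0 < β) (hK : 1 ≤ K) :
    ∃ C : ℝ, 0 ≤ C ∧ ∀ (u : ℝ) (x y : EuclideanSpace ℝ (Fin n)), 0 < u →
      ‖x - y‖ ≤ K → ‖x - y‖ * ‖x‖ ≤ K →
      |rexp (-(β * u)) * (ouKernel n u x y - euclidHeat n u (x - y))| ≤
        C * (1 + ‖x‖ ^ ((1 : ℝ) / 2)) * (u ^ (-(n : ℝ) / 2 + 1 / 4) *
          rexp (-(‖x - y‖ ^ 2 / (8 * u)))) := by
  obtain ⟨C₁, h₁, H₁⟩ := kernel_diff_small n K hK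
  obtain ⟨C₂, h₂, H₂⟩ := kernel_diff_large n β K hβ
  refine ⟨C₁ + C₂, by positivity, fun u x y hu hr hrx => ?_⟩
  rw [abs_mul, Real.abs_exp]
  set G := u ^ (-(n : ℝ) / 2 + 1 / 4) * rexp (-(‖x - y‖ ^ 2 / (8 * u))) with hG
  have hG0 : 0 ≤ G := by positivity
  set s := ‖x‖ ^ ((1 : ℝ) / 2)
  have hs : 0 ≤ s := by positivity
  have hC1 : 0 ≤ C₁ * (1 + s) * G := by positivity
  have hC2 : 0 ≤ C₂ * (1 + s) * G := by positivity
  rcases le_or_gt u 1 with h | h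
  · have h3 := H₁ u x y hu h hr hrx
    rw [mul_assoc, ← hG] at h3
    have h4 : rexp (-(β * u)) ≤ 1 := Real.exp_le_one_iff.2 (by nlinarith)
    calc _ ≤ 1 * (C₁ * (1 + s) * G) := by gcongr
      _ ≤ _ := by linarith
  · have h3 := H₂ u x y h.le hr
    rw [mul_assoc, ← hG] at h3
    have : C₂ * G ≤ C₂ * (1 + s) * G := by
      have : 0 ≤ C₂ * s * G := by positivity
      linarith
    linarith

/-! ### The kernel `H` -/

lemma Hkernel_pointwise (n : ℕ) (hn : 1 ≤ n) (σ β K : ℝ) (hσ : 0 < σ) (hβ : 0 < β) (hK : 1 ≤ K) :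
    ∃ C : ℝ, 0 ≤ C ∧ ∀ (x y : EuclideanSpace ℝ (Fin n)) (t : ℝ), 0 < t →
      ‖x - y‖ ≤ K → ‖x - y‖ * ‖x‖ ≤ K →
      ‖Hkernel n β σ x y t‖ ≤ C * (1 + ‖x‖ ^ ((1 : ℝ) / 2)) *
        (t ^ σ * (t ^ 2 + ‖x - y‖ ^ 2) ^ (-((σ + ((n : ℝ) - 1 / 2)) / 2))) := by
  obtain ⟨C₁, h₁, H₁⟩ := fracDeriv_bound σ
  obtain ⟨C₂, h₂, H₂⟩ := kernel_diff_bound n β K hβ hK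
  have hn1 : (1 : ℝ) ≤ n := by exact_mod_cast hn
  set a : ℝ := (σ + ((n : ℝ) - 1 / 2)) / 2 with ha
  have ha0 : 0 < a := by rw [ha]; linarith
  have hG : 0 < Real.Gamma a := Real.Gamma_pos_of_pos ha0
  refine ⟨1 / √(4 * Real.pi) * (C₁ * C₂ * ((1 / 8) ^ (-a) * Real.Gamma a)), by positivity,
    fun x y t ht hr hrx => ?_⟩
  set r := ‖x - y‖ with hrdef
  set S := 1 + ‖x‖ ^ ((1 : ℝ) / 2) with hS
  have hS0 : 0 ≤ S := by positivity
  have hc : 0 < 1 / 8 * (t ^ 2 + r ^ 2) := by positivity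
  obtain ⟨hint, hval⟩ := integral_inverse_gamma ha0 hc
  unfold Hkernel
  rw [norm_mul, Complex.norm_real, Real.norm_of_nonneg (by positivity)]
  have key := MeasureTheory.norm_integral_le_of_norm_le
    (f := fun u : ℝ =>
      fracDeriv σ (fun t => (t : ℂ) * Complex.exp (-((t : ℂ) ^ 2 / (4 * (u : ℂ))))) t *
        ((u ^ (-(3 : ℝ) / 2) : ℝ) : ℂ) *
        ((Real.exp (-(β * u)) * (ouKernel n u x y - euclidHeat n u (x - y)) : ℝ) : ℂ))
    (hint.const_mul (C₁ * (C₂ * S))) (by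
      filter_upwards [ae_restrict_mem measurableSet_Ioi] with u hu
      have hu : 0 < u := hu
      rw [norm_mul, norm_mul, Complex.norm_real, Complex.norm_real,
        Real.norm_of_nonneg (by positivity : 0 ≤ u ^ (-(3 : ℝ) / 2)), Real.norm_eq_abs]
      have e1 : u ^ (-a - 1) = u ^ ((1 - σ) / 2) * u ^ (-(3 : ℝ) / 2) *
          u ^ (-(n : ℝ) / 2 + 1 / 4) := by
        rw [← Real.rpow_add hu, ← Real.rpow_add hu]
        congr 1
        rw [ha]
        ring
      have e2 : rexp (-(1 / 8 * (t ^ 2 + r ^ 2) / u)) =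
          rexp (-(t ^ 2 / (8 * u))) * rexp (-(r ^ 2 / (8 * u))) := by
        rw [← Real.exp_add]
        congr 1
        field_simp
        ring
      calc _ ≤ (C₁ * u ^ ((1 - σ) / 2) * rexp (-(t ^ 2 / (8 * u)))) * u ^ (-(3 : ℝ) / 2) *
            (C₂ * S * (u ^ (-(n : ℝ) / 2 + 1 / 4) * rexp (-(r ^ 2 / (8 * u))))) := by
              have q1 := H₁ u t hu ht
              have q2 := H₂ u x y hu hr hrx
              gcongr
        _ = _ := by rw [e1, e2]; ring)
  rw [integral_const_mul, hval, Real.mul_rpow (by norm_num) (by positivity)] at key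
  calc _ ≤ t ^ σ / √(4 * Real.pi) * _ := mul_le_mul_of_nonneg_left key (by positivity)
    _ = _ := by ring

/-- For `n ≥ 1`, `σ > 0` and `β > 0` there is `C > 0` such that for all `(x,y)` in the region
`Ñ = {(x,y) : |x-y| < 2n(n+3)/(1+|x|+|y|)}` with `x ≠ y`,
`(∫_0^∞ |H_{β,σ}(x,y,t)|² dt/t)^{1/2} ≤ C(1+|x|^{1/2})/|x-y|^{n-1/2}`. -/
theorem Hkernel_pos_local_bound (n : ℕ) (hn : 1 ≤ n) (σ β : ℝ) (hσ : 0 < σ) (hβ : 0 < β) :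
    ∃ C > 0, ∀ x y : EuclideanSpace ℝ (Fin n),
      ‖x - y‖ < 2 * n * (n + 3) / (1 + ‖x‖ + ‖y‖) → x ≠ y →
      (∫ t in Set.Ioi (0 : ℝ), ‖Hkernel n β σ x y t‖ ^ 2 / t) ^ ((1 : ℝ) / 2) ≤
        C * (1 + ‖x‖ ^ ((1 : ℝ) / 2)) / ‖x - y‖ ^ ((n : ℝ) - 1 / 2) := by
  have hn1 : (1 : ℝ) ≤ n := by exact_mod_cast hn
  set K : ℝ := 2 * n * (n + 3) with hKdef
  have hK : 1 ≤ K := by rw [hKdef]; nlinarith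
  obtain ⟨C, hC, hb⟩ := Hkernel_pointwise n hn σ β K hσ hβ hK
  set p : ℝ := (n : ℝ) - 1 / 2 with hp
  have hp0 : 0 < p := by rw [hp]; linarith
  set L : ℝ := 1 / (2 * σ) + 1 / (2 * p) with hL
  have hL0 : 0 < L := by positivity
  -- `C + 1` instead of `C` only serves to make the constant positive
  refine ⟨(C + 1) * √L, by positivity, fun x y hxy hne => ?_⟩
  set r := ‖x - y‖ with hr
  have hr0 : 0 < r := norm_pos_iff.2 (sub_ne_zero.2 hne)
  rw [lt_div_iff₀ (by positivity)] at hxy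
  have hry : 0 ≤ r * ‖y‖ := by positivity
  have hrx : 0 ≤ r * ‖x‖ := by positivity
  set S := 1 + ‖x‖ ^ ((1 : ℝ) / 2) with hS
  have hS0 : 0 ≤ S := by positivity
  have hI := integral_t_bound (A := C * S) (f := fun t => ‖Hkernel n β σ x y t‖) hσ hp0 hr0
    (fun t _ => norm_nonneg _) (fun t ht => hb x y t ht (by linarith) (by linarith))
  rw [← Real.sqrt_eq_rpow]
  calc √(∫ t in Set.Ioi (0 : ℝ), ‖Hkernel n β σ x y t‖ ^ 2 / t)
      ≤ √((C * S) ^ 2 * L * r ^ (-(2 * p))) := Real.sqrt_le_sqrt hI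
    _ = C * √L * S / r ^ p := by
        have : r ^ (-(2 * p)) = ((r ^ p)⁻¹) ^ 2 := by
          rw [← Real.rpow_neg hr0.le, ← Real.rpow_natCast, ← Real.rpow_mul hr0.le]
          congr 1
          push_cast
          ring
        rw [this, Real.sqrt_mul (by positivity), Real.sqrt_mul (by positivity),
          Real.sqrt_sq (by positivity), Real.sqrt_sq (by positivity)]
        ring
    _ ≤ (C + 1) * √L * S / r ^ p := by
        gcongr
        linarith
end
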